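/- Assume the family Ψ_n satisfies property (P1) (the exchange relations). Then for each n ≥ 1 and each i = 1,…,n: ϑ₄(2(η+x_i),p²)·Z_n(…,−x_i,…) = ϑ₄(2(η−x_i),p²)·Z_n(…,x_i,…), and ϑ₁(2(η+x_i),p²)·Z̄_n^±(…,−x_i,…) = ϑ₁(2(η−x_i),p²)·Z̄_n^±(…,x_i,…). -/

import Mathlib

noncomputable section

open Complex
open scoped BigOperators

/-- Jacobi theta function `ϑ₁(z|τ)` with nome `p = e^{iπτ}` (Whittaker–Watson convention). -/
def th1 (z τ : ℂ) : ℂ :=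
  -Complex.I * ∑' n : ℤ, (-1 : ℂ) ^ n *
    Complex.exp ((Real.pi : ℂ) * Complex.I * τ * ((n : ℂ) + 1/2) ^ 2 + (2 * (n : ℂ) + 1) * Complex.I * z)

/-- Jacobi theta function `ϑ₂(z|τ)`. -/
def th2 (z τ : ℂ) : ℂ :=
  ∑' n : ℤ,
    Complex.exp ((Real.pi : ℂ) * Complex.I * τ * ((n : ℂ) + 1/2) ^ 2 + (2 * (n : ℂ) + 1) * Complex.I * z)

/-- Jacobi theta function `ϑ₃(z|τ)`. -/
def th3 (z τ : ℂ) : ℂ :=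
  ∑' n : ℤ, Complex.exp ((Real.pi : ℂ) * Complex.I * τ * (n : ℂ) ^ 2 + 2 * (n : ℂ) * Complex.I * z)

/-- Jacobi theta function `ϑ₄(z|τ)`. -/
def th4 (z τ : ℂ) : ℂ :=
  ∑' n : ℤ, (-1 : ℂ) ^ n *
    Complex.exp ((Real.pi : ℂ) * Complex.I * τ * (n : ℂ) ^ 2 + 2 * (n : ℂ) * Complex.I * z)

/-- The crossing parameter `η = π/3`. -/
def ηc : ℂ := (Real.pi : ℂ) / 3

/-- The elliptic nome `p = e^{iπτ}`. -/
def pnome (τ : ℂ) : ℂ := Complex.exp ((Real.pi : ℂ) * Complex.I * τ)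

/-- `ζ = (ϑ₁(η,p²)/ϑ₄(η,p²))²`. -/
def zet (τ : ℂ) : ℂ := (th1 ηc (2 * τ) / th4 ηc (2 * τ)) ^ 2

/-- The nome `p` is real with `0 < p < 1`. -/
def preal (τ : ℂ) : Prop := (pnome τ).im = 0 ∧ 0 < (pnome τ).re ∧ (pnome τ).re < 1

/-- A tuple given by a list of prescribed entries, padded by zeros. -/
def padded {n : ℕ} (l : List ℂ) : Fin n → ℂ := fun j => l.getD (j : ℕ) 0

/-- Extension of a tuple by a list of prescribed further entries (padded by zeros). -/
def extL {m n : ℕ} (w : Fin m → ℂ) (l : List ℂ) : Fin n → ℂ :=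
  fun j => if h : (j : ℕ) < m then w ⟨j, h⟩ else l.getD ((j : ℕ) - m) 0

/-- First `k` entries of a `2k`-tuple. -/
def firstHalf {k : ℕ} (x : Fin (2 * k) → ℂ) : Fin k → ℂ :=
  fun i => x ⟨(i : ℕ), by have := i.2; omega⟩

/-- Last `k` entries of a `2k`-tuple. -/
def secondHalf {k : ℕ} (x : Fin (2 * k) → ℂ) : Fin k → ℂ :=
  fun i => x ⟨k + (i : ℕ), by have := i.2; omega⟩

/-- `𝕙(x,y) = ϑ₁(x−y+η)ϑ₁(x−y−η)ϑ₁(x+y+η)ϑ₁(x+y−η)`. -/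
def hh (τ x y : ℂ) : ℂ :=
  th1 (x - y + ηc) τ * th1 (x - y - ηc) τ * th1 (x + y + ηc) τ * th1 (x + y - ηc) τ

/-- `𝔻(x₁,…,x_k) = ∏_{i<j} ϑ₁(x_j−x_i)ϑ₁(x_j+x_i)`. -/
def vdTheta (τ : ℂ) {k : ℕ} (y : Fin k → ℂ) : ℂ :=
  ∏ i : Fin k, ∏ j : Fin k, if i < j then th1 (y j - y i) τ * th1 (y j + y i) τ else 1

/-- The elliptic Tsuchiya determinant `ℍ_{2k}(x₁,…,x_k; x_{k+1},…,x_{2k})`. -/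
def tsuchiya (τ : ℂ) (k : ℕ) (x : Fin (2 * k) → ℂ) : ℂ :=
  (∏ i : Fin k, ∏ j : Fin k, hh τ (firstHalf x i) (secondHalf x j))
    / (vdTheta τ (firstHalf x) * vdTheta τ (secondHalf x))
    * Matrix.det (Matrix.of fun i j : Fin k => (hh τ (firstHalf x i) (secondHalf x j))⁻¹)

/-- The expression defining the elliptic Tsuchiya determinant is well defined:
the Vandermonde-type denominators and the entries `𝕙(x_i,x_{j+k})` are nonzero. -/
def tsuDefined (τ : ℂ) (k : ℕ) (x : Fin (2 * k) → ℂ) : Prop :=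
  (∀ i j : Fin k, i ≠ j →
    th1 (firstHalf x j - firstHalf x i) τ ≠ 0 ∧ th1 (firstHalf x j + firstHalf x i) τ ≠ 0) ∧
  (∀ i j : Fin k, i ≠ j →
    th1 (secondHalf x j - secondHalf x i) τ ≠ 0 ∧ th1 (secondHalf x j + secondHalf x i) τ ≠ 0) ∧
  (∀ i j : Fin k, hh τ (firstHalf x i) (secondHalf x j) ≠ 0)

/-- `h(w,w') = 1 − (3+ζ²)ww' + (1−ζ²)ww'(w+w')`. -/
def hpol (ζ w w' : ℂ) : ℂ := 1 - (3 + ζ ^ 2) * w * w' + (1 - ζ ^ 2) * w * w' * (w + w')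

/-- Vandermonde product `Δ(w₁,…,w_k) = ∏_{i<j}(w_j − w_i)`. -/
def vdm {k : ℕ} (y : Fin k → ℂ) : ℂ :=
  ∏ i : Fin k, ∏ j : Fin k, if i < j then y j - y i else 1

/-- The determinant-ratio expression defining the polynomial `H_{2k}`. -/
def Hratio (ζ : ℂ) (k : ℕ) (w : Fin (2 * k) → ℂ) : ℂ :=
  (∏ i : Fin k, ∏ j : Fin k, hpol ζ (firstHalf w i) (secondHalf w j))
    / (vdm (firstHalf w) * vdm (secondHalf w))
    * Matrix.det (Matrix.of fun i j : Fin k => (hpol ζ (firstHalf w i) (secondHalf w j))⁻¹)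

/-- The expression `Hratio` is well defined at `w`. -/
def HratioDefined (ζ : ℂ) (k : ℕ) (w : Fin (2 * k) → ℂ) : Prop :=
  (∀ i j : Fin k, i ≠ j → firstHalf w i ≠ firstHalf w j) ∧
  (∀ i j : Fin k, i ≠ j → secondHalf w i ≠ secondHalf w j) ∧
  (∀ i j : Fin k, hpol ζ (firstHalf w i) (secondHalf w j) ≠ 0)

/-- `H` is the family of Rosengren–Zinn-Justin polynomials `H_{2k}` for parameter `ζ`:
for each `k`, `H k` is a polynomial function of the `2k` variables agreeing with the
determinant-ratio formula wherever the latter is defined, and `H 0 = 1`. -/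
def IsHFamily (ζ : ℂ) (H : (k : ℕ) → (Fin (2 * k) → ℂ) → ℂ) : Prop :=
  (∀ w, H 0 w = 1) ∧
  (∀ k : ℕ, ∃ P : MvPolynomial (Fin (2 * k)) ℂ, ∀ w, H k w = MvPolynomial.eval w P) ∧
  (∀ (k : ℕ) (w : Fin (2 * k) → ℂ), HratioDefined ζ k w → H k w = Hratio ζ k w)

/-- Vertex weight `a(u)`. -/
def av (τ u : ℂ) : ℂ := th4 (2*ηc) (2*τ) * th1 (u + 2*ηc) (2*τ) * th4 u (2*τ)
/-- Vertex weight `b(u)`. -/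
def bv (τ u : ℂ) : ℂ := th4 (2*ηc) (2*τ) * th4 (u + 2*ηc) (2*τ) * th1 u (2*τ)
/-- Vertex weight `c(u)`. -/
def cv (τ u : ℂ) : ℂ := th1 (2*ηc) (2*τ) * th4 (u + 2*ηc) (2*τ) * th4 u (2*τ)
/-- Vertex weight `d(u)`. -/
def dv (τ u : ℂ) : ℂ := th1 (2*ηc) (2*τ) * th1 (u + 2*ηc) (2*τ) * th1 u (2*τ)
/-- `r(u) = a(u) + b(u)`. -/
def rv (τ u : ℂ) : ℂ := av τ u + bv τ u

/-- Entries of the `R`-matrix of the eight-vertex model, in the basis `{↑↑,↑↓,↓↑,↓↓}`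
identified with `Fin 2 × Fin 2` (`↑ = 0`, `↓ = 1`). -/
def Rent (τ u : ℂ) (p q : Fin 2 × Fin 2) : ℂ :=
  if p = q then (if p.1 = p.2 then av τ u else bv τ u)
  else if q = (p.2, p.1) then cv τ u
  else if p.1 = p.2 ∧ q.1 = q.2 then dv τ u
  else 0

/-- Entries of `Ř(u) = 𝒫 R(u)`. -/
def Rcheckent (τ u : ℂ) (p q : Fin 2 × Fin 2) : ℂ := Rent τ u (p.2, p.1) q

/-- The boundary vector `χ(x) ∈ ℂ²⊗ℂ²`. -/
def chiV (τ lam x : ℂ) : Fin 2 × Fin 2 → ℂ := fun p =>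
  if p = ((0 : Fin 2), (1 : Fin 2)) then th1 (x + lam) (2*τ) * th4 (x - lam - 2*ηc) (2*τ)
  else if p = ((1 : Fin 2), (0 : Fin 2)) then th1 (x - lam - 2*ηc) (2*τ) * th4 (x + lam) (2*τ)
  else 0

/-- The boundary vector `χ̄(x) ∈ ℂ²⊗ℂ²`. -/
def chibarV (τ lam x : ℂ) : Fin 2 × Fin 2 → ℂ := fun p =>
  if p = ((0 : Fin 2), (0 : Fin 2)) then th1 (x + lam) (2*τ) * th1 (x - lam - 2*ηc) (2*τ)
  else if p = ((1 : Fin 2), (1 : Fin 2)) then th4 (x - lam - 2*ηc) (2*τ) * th4 (x + lam) (2*τ)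
  else 0

/-- A family `Ψ_n(u₁,…,u_{2n+1}) ∈ (ℂ²)^{⊗(2n+1)}`, represented by its components
with respect to spin configurations `α : Fin (2n+1) → Fin 2` (`↑ = 0`, `↓ = 1`). -/
abbrev PsiFam := (n : ℕ) → (Fin (2 * n + 1) → ℂ) → (Fin (2 * n + 1) → Fin 2) → ℂ

/-- The action of `Ř(u)` on tensor factors `i`, `j` of `(ℂ²)^{⊗L}`. -/
def applyRc (τ u : ℂ) {L : ℕ} (i j : Fin L) (ψ : (Fin L → Fin 2) → ℂ) :
    (Fin L → Fin 2) → ℂ := fun α =>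
  ∑ s : Fin 2, ∑ t : Fin 2,
    Rcheckent τ u (α i, α j) (s, t) * ψ (Function.update (Function.update α i s) j t)

/-- Spin flip. -/
def flipS : Fin 2 → Fin 2 := fun s => if s = 0 then 1 else 0

/-- Components of the singlet `s = ↑↓ − ↓↑`. -/
def singletC : Fin 2 → Fin 2 → ℂ := fun s t =>
  if s = 0 ∧ t = 1 then 1 else if s = 1 ∧ t = 0 then -1 else 0

/-- Delete the entries at positions `i`, `i+1` from a tuple. -/
def delTwo {α : Type*} {n : ℕ} (i : ℕ) (u : Fin (2 * (n + 1) + 1) → α) : Fin (2 * n + 1) → α :=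
  fun j => if _h : (j : ℕ) < i then u ⟨j, by have := j.2; omega⟩
           else u ⟨(j : ℕ) + 2, by have := j.2; omega⟩

/-- The components of `Ψ_n` are entire functions of each `u_i`. -/
def PsiEntire (Ψ : PsiFam) : Prop :=
  ∀ (n : ℕ) (u : Fin (2*n+1) → ℂ) (i : Fin (2*n+1)) (α : Fin (2*n+1) → Fin 2),
    Differentiable ℂ fun z => Ψ n (Function.update u i z) α

/-- (P1): the exchange relations. -/
def PsiP1 (τ : ℂ) (Ψ : PsiFam) : Prop :=
  ∀ (n : ℕ) (u : Fin (2*n+1) → ℂ) (i j : Fin (2*n+1)), (j : ℕ) = (i : ℕ) + 1 →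
    applyRc τ (u j - u i) i j (Ψ n u)
      = fun α => rv τ (u j - u i) * Ψ n (fun l => u (Equiv.swap i j l)) α

/-- (P2): local spin flips. -/
def PsiP2 (τ : ℂ) (Ψ : PsiFam) : Prop :=
  ∀ (n : ℕ) (u : Fin (2*n+1) → ℂ) (i : Fin (2*n+1)) (α : Fin (2*n+1) → Fin 2),
    Ψ n u (Function.update α i (flipS (α i)))
      = (-(pnome τ)) ^ n * Complex.exp (-Complex.I * ∑ j, (u j - u i))
        * Ψ n (Function.update u i (u i + Real.pi * τ)) α

/-- (P3): quasi-periodicity of `Ψ_n` in each `u_i`. -/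
def PsiP3 (τ : ℂ) (Ψ : PsiFam) : Prop :=
  ∀ (n : ℕ) (u : Fin (2*n+1) → ℂ) (i : Fin (2*n+1)),
    (Ψ n (Function.update u i (u i + Real.pi))
      = fun α => (∏ j ∈ Finset.univ.erase i, (if α j = 0 then (1:ℂ) else -1)) * Ψ n u α) ∧
    (Ψ n (Function.update u i (u i + 2 * Real.pi * τ))
      = fun α => (pnome τ ^ (4*n))⁻¹ *
          Complex.exp (-2 * Complex.I * ∑ j, (u i - u j)) * Ψ n u α)

/-- (P4): the wheel condition. -/
def PsiP4 (Ψ : PsiFam) : Prop :=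
  ∀ (n : ℕ) (u : Fin (2*n+1) → ℂ),
    (∃ i j k : Fin (2*n+1), i < j ∧ j < k ∧ u j = u i + 2*ηc ∧ u k = u i + 4*ηc) →
    Ψ n u = 0

/-- (P5): the reduction relations. -/
def PsiP5 (τ : ℂ) (Ψ : PsiFam) : Prop :=
  ∀ (n : ℕ) (u : Fin (2*(n+1)+1) → ℂ) (i : ℕ) (hi : i + 1 < 2*(n+1)+1),
    u ⟨i+1, hi⟩ = u ⟨i, by omega⟩ + 2*ηc →
    Ψ (n+1) u = fun α =>
      (∏ j ∈ (Finset.univ.erase (⟨i, by omega⟩ : Fin (2*(n+1)+1))).erase ⟨i+1, hi⟩,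
          th1 (u ⟨i, by omega⟩ - u j - 2*ηc) τ)
        * singletC (α ⟨i, by omega⟩) (α ⟨i+1, hi⟩)
        * Ψ n (delTwo i u) (delTwo i α)

/-- (P6): `Ψ₀ = ↑ + ↓`. -/
def PsiP6 (Ψ : PsiFam) : Prop := ∀ u α, Ψ 0 u α = 1

/-- The inhomogeneity parameters `(x₁,−x₁,…,x_n,−x_n,0)`. -/
def interleave {n : ℕ} (x : Fin n → ℂ) : Fin (2*n+1) → ℂ := fun j =>
  if h : (j : ℕ) < 2*n then
    (if (j : ℕ) % 2 = 0 then x ⟨(j:ℕ)/2, by omega⟩ else -x ⟨(j:ℕ)/2, by omega⟩)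
  else 0

/-- Components of `χ(x)`. -/
def chiC (τ lam x : ℂ) (s t : Fin 2) : ℂ :=
  if s = 0 ∧ t = 1 then th1 (x + lam) (2*τ) * th4 (x - lam - 2*ηc) (2*τ)
  else if s = 1 ∧ t = 0 then th1 (x - lam - 2*ηc) (2*τ) * th4 (x + lam) (2*τ)
  else 0

/-- Components of `χ̄(x)`. -/
def chibarC (τ lam x : ℂ) (s t : Fin 2) : ℂ :=
  if s = 0 ∧ t = 0 then th1 (x + lam) (2*τ) * th1 (x - lam - 2*ηc) (2*τ)
  else if s = 1 ∧ t = 1 then th4 (x - lam - 2*ηc) (2*τ) * th4 (x + lam) (2*τ)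
  else 0

/-- The scalar product `Z_n(x₁,…,x_n) = ⟨ξ_n(x₁,…,x_n), Ψ_n(x₁,−x₁,…,x_n,−x_n,0)⟩`. -/
def Zfun (τ lam : ℂ) (Ψ : PsiFam) (n : ℕ) (x : Fin n → ℂ) : ℂ :=
  ∑ α : Fin (2*n+1) → Fin 2,
    (∏ m : Fin n, chiC τ lam (x m)
        (α ⟨2*(m:ℕ), by have := m.2; omega⟩) (α ⟨2*(m:ℕ)+1, by have := m.2; omega⟩))
      * (if α ⟨2*n, by omega⟩ = 0 then (1:ℂ) else 0)
      * Ψ n (interleave x) α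

/-- The scalar product `Z̄_n^±(x₁,…,x_n)`, with `ε = ±1`. -/
def Zbarfun (τ lam ε : ℂ) (Ψ : PsiFam) (n : ℕ) (x : Fin n → ℂ) : ℂ :=
  ∑ α : Fin (2*n+1) → Fin 2,
    (∏ m : Fin n, chibarC τ lam (x m)
        (α ⟨2*(m:ℕ), by have := m.2; omega⟩) (α ⟨2*(m:ℕ)+1, by have := m.2; omega⟩))
      * (if α ⟨2*n, by omega⟩ = 0 then (1:ℂ) else ε)
      * Ψ n (interleave x) α

/-- The normalisation constant `𝒩_n`. -/
def Ncoef (τ : ℂ) (n : ℕ) : ℂ :=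
  (-1 : ℂ) ^ ((n+1)/2) * (th1 ηc τ ^ (n^2))⁻¹ * (th4 0 (2*τ) / th4 ηc (2*τ)) ^ (n*(n+1)/2)

/-- The vector `ψ_n = 𝒩_n Ψ_n(0,…,0)`. -/
def psiH (τ : ℂ) (Ψ : PsiFam) (n : ℕ) (α : Fin (2*n+1) → Fin 2) : ℂ :=
  Ncoef τ n * Ψ n (fun _ => 0) α

/-- The scalar product `S_n(μ) = ((⟨↑↓| + μ⟨↓↑|)^{⊗n} ⊗ ⟨↑|) ψ_n`. -/
def Sfun (τ : ℂ) (Ψ : PsiFam) (n : ℕ) (μ : ℂ) : ℂ :=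
  ∑ α : Fin (2*n+1) → Fin 2,
    (∏ m : Fin n,
      (if α ⟨2*(m:ℕ), by have := m.2; omega⟩ = 0 ∧ α ⟨2*(m:ℕ)+1, by have := m.2; omega⟩ = 1
        then (1:ℂ)
       else if α ⟨2*(m:ℕ), by have := m.2; omega⟩ = 1 ∧ α ⟨2*(m:ℕ)+1, by have := m.2; omega⟩ = 0
        then μ
       else 0))
      * (if α ⟨2*n, by omega⟩ = 0 then (1:ℂ) else 0) * psiH τ Ψ n α

/-- The scalar product `S̄_n^±(ν) = ((⟨↑↑| + ν⟨↓↓|)^{⊗n} ⊗ (⟨↑| ± ⟨↓|)) ψ_n`, with `ε = ±1`. -/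
def Sbarfun (τ ε : ℂ) (Ψ : PsiFam) (n : ℕ) (ν : ℂ) : ℂ :=
  ∑ α : Fin (2*n+1) → Fin 2,
    (∏ m : Fin n,
      (if α ⟨2*(m:ℕ), by have := m.2; omega⟩ = 0 ∧ α ⟨2*(m:ℕ)+1, by have := m.2; omega⟩ = 0
        then (1:ℂ)
       else if α ⟨2*(m:ℕ), by have := m.2; omega⟩ = 1 ∧ α ⟨2*(m:ℕ)+1, by have := m.2; omega⟩ = 1
        then ν
       else 0))
      * (if α ⟨2*n, by omega⟩ = 0 then (1:ℂ) else ε) * psiH τ Ψ n α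

/-- The alternating spin configuration `↑↓↑↓⋯↑`. -/
def altConf {L : ℕ} : Fin L → Fin 2 := fun j => if (j : ℕ) % 2 = 0 then 0 else 1

/-- The fully polarised spin configuration `↓⋯↓`. -/
def downConf {L : ℕ} : Fin L → Fin 2 := fun _ => 1

/-- The spin configuration `↑⋯↑↓` with a single `↓` at the last site. -/
def lastDownConf {n : ℕ} : Fin (2*n+1) → Fin 2 := fun j => if (j : ℕ) = 2*n then 1 else 0

/-- `J₂ = −1/2`. -/
def J2c : ℂ := -(1/2)
/-- `J₃ = 1/(1+ζ)`. -/
def J3c (ζ : ℂ) : ℂ := 1/(1+ζ)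
/-- `J₄ = 1/(1−ζ)`. -/
def J4c (ζ : ℂ) : ℂ := 1/(1-ζ)
/-- `μ̄ = (μ−1)²/((ζ²−1)μ)`. -/
def mubar (ζ μ : ℂ) : ℂ := (μ - 1)^2 / ((ζ^2 - 1)*μ)
/-- `ν̄ = (ν−ζ)(νζ−1)/((ζ²−1)ν)`. -/
def nubar (ζ ν : ℂ) : ℂ := (ν - ζ)*(ν*ζ - 1) / ((ζ^2 - 1)*ν)

/-- The elliptic function `w(x)`. -/
def wfun (τ x : ℂ) : ℂ :=
  th4 ηc (2*τ) / th4 0 (2*τ) * th1 x τ ^ 2 / (th1 (x - ηc) τ * th1 (x + ηc) τ)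

/-- `β₂ = η + π/2`. -/
def β2c : ℂ := ηc + (Real.pi : ℂ)/2
/-- `β₃ = η + π/2 + πτ/2`. -/
def β3c (τ : ℂ) : ℂ := ηc + (Real.pi : ℂ)/2 + (Real.pi : ℂ)*τ/2
/-- `β₄ = η + πτ/2`. -/
def β4c (τ : ℂ) : ℂ := ηc + (Real.pi : ℂ)*τ/2

/-- `f` is an (even) theta function of degree `m`, nome `p = e^{iπτ}` and norm `0`
with respect to each of its variables. -/
def ThetaLike (τ : ℂ) (m : ℕ) {n : ℕ} (X : (Fin n → ℂ) → ℂ) : Prop :=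
  ∀ (x : Fin n → ℂ) (i : Fin n),
    Differentiable ℂ (fun z => X (Function.update x i z)) ∧
    (∀ z, X (Function.update x i (z + Real.pi)) = X (Function.update x i z)) ∧
    (∀ z, X (Function.update x i (z + Real.pi * τ))
        = ((-(pnome τ)) ^ m)⁻¹ * Complex.exp (-2 * Complex.I * ((m : ℂ) * z))
            * X (Function.update x i z)) ∧
    (∀ z, X (Function.update x i (-z)) = X (Function.update x i z))

/-!
The inhomogeneities of the two sites of the block `i` are `x_i` and `-x_i`, so replacing `x_i` by
`-x_i` exchanges them. By (P1) this exchange is performed on `Ψ_n` by `Ř(2x_i)`, up to the factor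
`r(2x_i)`, and in the pairing `Ř` can be moved to the boundary vector because it is symmetric. There
it acts by a reflection relation `E(2η - 2y) Ř(2y) K(y) = r(2y) E(2η + 2y) K(-y)`, with `E = ϑ₄` for
`K = χ` and `E = ϑ₁` for `K = χ̄`. The factor `r(2x_i)` is then cancelled: it may vanish at the
given `x_i`, but it does not vanish identically, and both sides are entire in `x_i`.

The reflection relations combine three-term addition formulas for theta functions with the
factorisation `r(u) = ϑ₄(0,p²) ϑ₁(2η - u,p²) ϑ₄(2η - u,p²)`. The latter is special to `η = π/3` and
comes down to a theta constant identity that expresses the vanishing of a lattice sum whose terms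
are odd under a reflection.
-/

section JacobiTheta

open scoped Real

lemma differentiable_jacobiTheta₂_fst {τ : ℂ} (hτ : 0 < τ.im) :
    Differentiable ℂ (jacobiTheta₂ · τ) :=
  fun z => differentiableAt_jacobiTheta₂_fst z hτ

lemma jacobiTheta₂_term_add (n : ℤ) (z w τ : ℂ) :
    jacobiTheta₂_term n (z + w) τ = cexp (2 * π * I * n * w) * jacobiTheta₂_term n z τ := by
  rw [jacobiTheta₂_term, jacobiTheta₂_term, ← Complex.exp_add]
  ring_nf

lemma hasSum_jacobiTheta₂_term_mul (z w : ℂ) {τ σ : ℂ} (hτ : 0 < τ.im) (hσ : 0 < σ.im) :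
    HasSum (fun p : ℤ × ℤ => jacobiTheta₂_term p.1 z τ * jacobiTheta₂_term p.2 w σ)
      (jacobiTheta₂ z τ * jacobiTheta₂ w σ) := by
  have hz := ((summable_jacobiTheta₂_term_iff z τ).2 hτ).norm
  have hw := ((summable_jacobiTheta₂_term_iff w σ).2 hσ).norm
  have hsum := (summable_mul_of_summable_norm hz hw).hasSum
  rwa [← tsum_mul_tsum_of_summable_norm hz hw] at hsum

/-- The decomposition of the lattice `ℤ × ℤ` into the pairs with even sum and the pairs with odd
sum, each parametrised by `ℤ × ℤ`; it splits a product of two theta series. -/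
def sumParityEquiv : (ℤ × ℤ) ⊕ (ℤ × ℤ) ≃ ℤ × ℤ where
  toFun := Sum.elim (fun p => (p.1 + p.2, p.1 - p.2)) (fun p => (p.1 + p.2, p.1 - p.2 - 1))
  invFun q := if (q.1 + q.2) % 2 = 0 then Sum.inl ((q.1 + q.2) / 2, (q.1 - q.2) / 2)
    else Sum.inr ((q.1 + q.2 + 1) / 2, (q.1 - q.2 - 1) / 2)
  left_inv p := by
    rcases p with ⟨a, b⟩ | ⟨a, b⟩
    · refine (if_pos (by simp only [Sum.elim_inl]; lia)).trans ?_
      simp only [Sum.elim_inl, Sum.inl.injEq, Prod.mk.injEq]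
      lia
    · refine (if_neg (by simp only [Sum.elim_inr]; lia)).trans ?_
      simp only [Sum.elim_inr, Sum.inr.injEq, Prod.mk.injEq]
      lia
  right_inv q := by
    dsimp only
    split_ifs with h
    · refine Prod.ext ?_ ?_ <;> simp only [Sum.elim_inl] <;> lia
    · refine Prod.ext ?_ ?_ <;> simp only [Sum.elim_inr] <;> lia

theorem jacobiTheta₂_mul_jacobiTheta₂ {τ : ℂ} (hτ : 0 < τ.im) (a b : ℂ) :
    jacobiTheta₂ a τ * jacobiTheta₂ b τ
      = jacobiTheta₂ (a + b) (2 * τ) * jacobiTheta₂ (a - b) (2 * τ)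
        + cexp (π * I * τ - 2 * π * I * b)
          * (jacobiTheta₂ (a + b - τ) (2 * τ) * jacobiTheta₂ (a - b + τ) (2 * τ)) := by
  have h2τ : 0 < (2 * τ).im := by simpa using hτ
  refine (hasSum_jacobiTheta₂_term_mul a b hτ hτ).unique (sumParityEquiv.hasSum_iff.1 ?_)
  refine HasSum.sum ?_ ?_
  · convert! hasSum_jacobiTheta₂_term_mul (a + b) (a - b) h2τ h2τ using 2 with p
    simp only [Function.comp_apply, sumParityEquiv, Equiv.coe_fn_mk, Sum.elim_inl,
      jacobiTheta₂_term, ← Complex.exp_add]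
    push_cast
    ring_nf
  · convert! (hasSum_jacobiTheta₂_term_mul (a + b - τ) (a - b + τ) h2τ h2τ).mul_left _ using 2
      with p
    simp only [Function.comp_apply, sumParityEquiv, Equiv.coe_fn_mk, Sum.elim_inr,
      jacobiTheta₂_term, ← Complex.exp_add]
    push_cast
    ring_nf

lemma one_add_zpow_add_zpow_eq_zero {ω : ℂ} (hω : IsPrimitiveRoot ω 3) {k : ℤ}
    (hk : ¬ (3 : ℤ) ∣ k) : 1 + ω ^ k + ω ^ (2 * k) = 0 := by
  have hne : ω ^ k - 1 ≠ 0 := sub_ne_zero.2 (mt (hω.zpow_eq_one_iff_dvd k).1 hk)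
  have hcube : (ω ^ k) ^ 3 = 1 := by
    rw [← zpow_natCast, ← zpow_mul, mul_comm, zpow_mul, zpow_natCast, hω.pow_eq_one, one_zpow]
  rw [mul_comm 2 k, zpow_mul, zpow_ofNat]
  exact mul_left_cancel₀ hne (by linear_combination hcube)

/-- The reflection of the sublattice `3 ∣ n + m + 1` that fixes `n + m` and preserves the quadratic
form `n ^ 2 + 2 * (m + 1 / 4) ^ 2`, extended by the identity to `ℤ × ℤ`. -/
def cubicReflection : Equiv.Perm (ℤ × ℤ) :=
  Function.Involutive.toPerm
    (fun q => if (3 : ℤ) ∣ q.1 + q.2 + 1 then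
      ((q.1 + q.2 + 1) / 3 + q.2, 2 * ((q.1 + q.2 + 1) / 3) - 1 - q.2) else q)
    (fun q => by
      dsimp only
      split_ifs <;> first | rfl | (refine Prod.ext ?_ ?_ <;> dsimp only at * <;> lia))

lemma cubicReflection_mk (t m : ℤ) :
    cubicReflection (3 * t - 1 - m, m) = (t + m, 2 * t - 1 - m) := by
  have h : 3 * t - 1 - m + m + 1 = 3 * t := by ring
  refine (if_pos ⟨t, h⟩).trans ?_
  simp only [h, Int.mul_ediv_cancel_left t three_ne_zero]

lemma cubicReflection_of_not_dvd {q : ℤ × ℤ} (hq : ¬ (3 : ℤ) ∣ q.1 + q.2 + 1) :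
    cubicReflection q = q :=
  if_neg hq

lemma jacobiTheta₂_term_mul_cubicReflection (τ : ℂ) (t m : ℤ) :
    jacobiTheta₂_term (t + m) (1 / 2) τ * jacobiTheta₂_term (2 * t - 1 - m) (τ / 2) (2 * τ)
      = -(jacobiTheta₂_term (3 * t - 1 - m) (1 / 2) τ
        * jacobiTheta₂_term m (τ / 2) (2 * τ)) := by
  have hexp : cexp (π * I + ((m - t : ℤ) : ℂ) * (2 * π * I)) = -1 := by
    rw [Complex.exp_add, Complex.exp_pi_mul_I, Complex.exp_int_mul_two_pi_mul_I, mul_one]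
  rw [← neg_one_mul, ← hexp]
  simp only [jacobiTheta₂_term, ← Complex.exp_add]
  push_cast
  ring_nf

/-- The sum over the cube roots of unity selects the sublattice `3 ∣ n + m + 1`, on which the terms
change sign under `cubicReflection`. -/
theorem jacobiTheta₂_cubic {τ : ℂ} (hτ : 0 < τ.im) :
    jacobiTheta₂ (1 / 2) τ * jacobiTheta₂ (τ / 2) (2 * τ)
      + cexp (2 * π * I / 3)
        * (jacobiTheta₂ (1 / 2 + 1 / 3) τ * jacobiTheta₂ (τ / 2 + 1 / 3) (2 * τ))
      + cexp (2 * π * I / 3) ^ 2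
        * (jacobiTheta₂ (1 / 2 + 2 / 3) τ * jacobiTheta₂ (τ / 2 + 2 / 3) (2 * τ)) = 0 := by
  have h2τ : 0 < (2 * τ).im := by simpa using hτ
  have hω : IsPrimitiveRoot (cexp (2 * π * I / 3)) 3 := by
    simpa using Complex.isPrimitiveRoot_exp 3 three_ne_zero
  have hpow (k : ℤ) : cexp (2 * π * I * k * (1 / 3)) = cexp (2 * π * I / 3) ^ k := by
    rw [← Complex.exp_int_mul]
    ring_nf
  have hpow_sq (k : ℤ) : cexp (2 * π * I * k * (2 / 3)) = (cexp (2 * π * I / 3) ^ k) ^ 2 := by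
    rw [← hpow, ← Complex.exp_nat_mul]
    ring_nf
  set ω := cexp (2 * π * I / 3)
  let T : ℤ × ℤ → ℂ := fun q =>
    jacobiTheta₂_term q.1 (1 / 2) τ * jacobiTheta₂_term q.2 (τ / 2) (2 * τ)
  let G : ℤ × ℤ → ℂ := fun q =>
    (1 + ω ^ (q.1 + q.2 + 1) + ω ^ (2 * (q.1 + q.2 + 1))) * T q
  have hodd (q : ℤ × ℤ) : G (cubicReflection q) = -G q := by
    by_cases hq : (3 : ℤ) ∣ q.1 + q.2 + 1
    · obtain ⟨n, m⟩ := q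
      obtain ⟨t, ht⟩ := hq
      obtain rfl : n = 3 * t - 1 - m := by lia
      simp only [G, T, cubicReflection_mk, jacobiTheta₂_term_mul_cubicReflection]
      ring_nf
    · rw [cubicReflection_of_not_dvd hq]
      simp only [G, one_add_zpow_add_zpow_eq_zero hω hq, zero_mul, neg_zero]
  have hG : ∑' q, G q = 0 := by
    have h := cubicReflection.tsum_eq G
    rw [tsum_congr hodd, tsum_neg] at h
    exact self_eq_neg.1 h.symm
  refine ((((hasSum_jacobiTheta₂_term_mul _ _ hτ h2τ).add
    ((hasSum_jacobiTheta₂_term_mul _ _ hτ h2τ).mul_left ω)).add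
    ((hasSum_jacobiTheta₂_term_mul _ _ hτ h2τ).mul_left (ω ^ 2))).tsum_eq.symm.trans
    (tsum_congr fun q => ?_)).trans hG
  simp only [G, T, jacobiTheta₂_term_add, hpow, hpow_sq, two_mul (q.1 + q.2 + 1),
    zpow_add₀ (hω.ne_zero three_ne_zero), zpow_one]
  ring

lemma integral_jacobiTheta₂_term (n : ℤ) (τ : ℂ) :
    ∫ x in (0 : ℝ)..1, jacobiTheta₂_term n x τ = if n = 0 then 1 else 0 := by
  split_ifs with hn
  · simp [jacobiTheta₂_term, hn]
  · have hc : 2 * π * I * n ≠ 0 := mul_ne_zero Complex.two_pi_I_ne_zero (mod_cast hn)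
    simp only [jacobiTheta₂_term, Complex.exp_add, intervalIntegral.integral_mul_const]
    rw [integral_exp_mul_complex hc, mul_comm (2 * π * I) (n : ℂ), Complex.ofReal_one, mul_one,
      Complex.exp_int_mul_two_pi_mul_I]
    simp

lemma integral_jacobiTheta₂ {τ : ℂ} (hτ : 0 < τ.im) :
    ∫ x in (0 : ℝ)..1, jacobiTheta₂ x τ = 1 := by
  let f : ℤ → C(ℝ, ℂ) := fun n =>
    ⟨fun x => jacobiTheta₂_term n x τ, by unfold jacobiTheta₂_term; fun_prop⟩
  have hbound : Summable fun n => ‖(f n).restrict (⟨Set.uIcc 0 1, isCompact_uIcc⟩ :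
      TopologicalSpace.Compacts ℝ)‖ := by
    refine Summable.of_nonneg_of_le (fun _ => norm_nonneg _) (fun n => ?_)
      ((summable_jacobiTheta₂_term_iff 0 τ).2 hτ).norm
    refine (ContinuousMap.norm_le _ (norm_nonneg _)).2 fun x => ?_
    simp [f, norm_jacobiTheta₂_term]
  have hsum := intervalIntegral.hasSum_intervalIntegral_of_summable_norm hbound
  refine hsum.unique ?_
  simp only [f, ContinuousMap.coe_mk, integral_jacobiTheta₂_term]
  exact hasSum_ite_eq 0 1

lemma exists_jacobiTheta₂_ne_zero {τ : ℂ} (hτ : 0 < τ.im) : ∃ z, jacobiTheta₂ z τ ≠ 0 := by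
  by_contra! hzero
  simpa [hzero] using integral_jacobiTheta₂ hτ

lemma eq_zero_or_eq_zero_of_differentiable_mul_eq_zero {f g : ℂ → ℂ} (hf : Differentiable ℂ f)
    (hg : Differentiable ℂ g) (h : ∀ z, f z * g z = 0) : (∀ z, f z = 0) ∨ ∀ z, g z = 0 := by
  simpa using AnalyticOnNhd.eq_zero_or_eq_zero_of_mul_eq_zero
    (fun z _ => hf.analyticAt z) (fun z _ => hg.analyticAt z) (fun z _ => h z)
    (isPreconnected_univ (α := ℂ))

end JacobiTheta

section Theta

open scoped Real

lemma th4_eq_jacobiTheta₂ (z τ : ℂ) : th4 z τ = jacobiTheta₂ (z / π + 1 / 2) τ := by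
  refine tsum_congr fun n => ?_
  have hπ : (π : ℂ) ≠ 0 := mod_cast Real.pi_ne_zero
  rw [jacobiTheta₂_term, ← Complex.exp_pi_mul_I, ← Complex.exp_int_mul, ← Complex.exp_add]
  congr 1
  field

lemma th1_eq_jacobiTheta₂ (z τ : ℂ) :
    th1 z τ = -I * cexp (π * I * τ / 4 + I * z) * jacobiTheta₂ (z / π + 1 / 2 + τ / 2) τ := by
  rw [th1, jacobiTheta₂, mul_assoc (-I), ← tsum_mul_left (a := cexp _)]
  refine congrArg (-I * ·) (tsum_congr fun n => ?_)
  have hπ : (π : ℂ) ≠ 0 := mod_cast Real.pi_ne_zero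
  rw [jacobiTheta₂_term, ← Complex.exp_pi_mul_I, ← Complex.exp_int_mul, ← Complex.exp_add,
    ← Complex.exp_add]
  congr 1
  field

lemma differentiable_th1 {τ : ℂ} (hτ : 0 < τ.im) : Differentiable ℂ (th1 · τ) := by
  have h := (differentiable_jacobiTheta₂_fst hτ).comp
    (by fun_prop : Differentiable ℂ fun z : ℂ => z / π + 1 / 2 + τ / 2)
  simp only [th1_eq_jacobiTheta₂]
  exact (by fun_prop : Differentiable ℂ fun z => -I * cexp (π * I * τ / 4 + I * z)).mul h

lemma differentiable_th4 {τ : ℂ} (hτ : 0 < τ.im) : Differentiable ℂ (th4 · τ) := by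
  have h := (differentiable_jacobiTheta₂_fst hτ).comp
    (by fun_prop : Differentiable ℂ fun z : ℂ => z / π + 1 / 2)
  simp only [th4_eq_jacobiTheta₂]
  exact h

lemma exists_th1_ne_zero {τ : ℂ} (hτ : 0 < τ.im) : ∃ z, th1 z τ ≠ 0 := by
  obtain ⟨w, hw⟩ := exists_jacobiTheta₂_ne_zero hτ
  refine ⟨π * (w - 1 / 2 - τ / 2), ?_⟩
  have hπ : (π : ℂ) ≠ 0 := mod_cast Real.pi_ne_zero
  rw [th1_eq_jacobiTheta₂, mul_div_cancel_left₀ _ hπ, sub_right_comm, sub_add_cancel,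
    sub_add_cancel]
  exact mul_ne_zero (mul_ne_zero (neg_ne_zero.2 I_ne_zero) (Complex.exp_ne_zero _)) hw

lemma exists_th4_ne_zero {τ : ℂ} (hτ : 0 < τ.im) : ∃ z, th4 z τ ≠ 0 := by
  obtain ⟨w, hw⟩ := exists_jacobiTheta₂_ne_zero hτ
  refine ⟨π * (w - 1 / 2), ?_⟩
  have hπ : (π : ℂ) ≠ 0 := mod_cast Real.pi_ne_zero
  rwa [th4_eq_jacobiTheta₂, mul_div_cancel_left₀ _ hπ, sub_add_cancel]

/-- The factor by which translation through the half period `π τ / 2` turns `ϑ₁` into `ϑ₄` and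
`ϑ₄` into `ϑ₁`. -/
def halfPeriodMultiplier (z τ : ℂ) : ℂ :=
  I * cexp (-(π * I * τ / 4) - I * z)

lemma halfPeriodMultiplier_ne_zero (z τ : ℂ) : halfPeriodMultiplier z τ ≠ 0 :=
  mul_ne_zero I_ne_zero (Complex.exp_ne_zero _)

lemma halfPeriodMultiplier_mul_eq {z z' w w' : ℂ} (τ : ℂ) (h : z + z' = w + w') :
    halfPeriodMultiplier z τ * halfPeriodMultiplier z' τ
      = halfPeriodMultiplier w τ * halfPeriodMultiplier w' τ := by
  simp only [halfPeriodMultiplier, mul_mul_mul_comm, ← Complex.exp_add]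
  congr 2
  linear_combination -I * h

lemma th1_add_half_period (z τ : ℂ) :
    th1 (z + π * τ / 2) τ = halfPeriodMultiplier z τ * th4 z τ := by
  have hπ : (π : ℂ) ≠ 0 := mod_cast Real.pi_ne_zero
  have harg : (z + π * τ / 2) / π + 1 / 2 + τ / 2 = z / π + 1 / 2 + τ := by field
  have hexp : π * I * τ / 4 + I * (z + π * τ / 2) + -π * I * (τ + 2 * (z / π + 1 / 2))
      = -(π * I * τ / 4) - I * z - π * I := by field
  rw [th1_eq_jacobiTheta₂, th4_eq_jacobiTheta₂, harg, jacobiTheta₂_add_left', ← mul_assoc,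
    mul_assoc (-I), ← Complex.exp_add, hexp, Complex.exp_sub, Complex.exp_pi_mul_I,
    halfPeriodMultiplier]
  ring

lemma th4_add_half_period (z τ : ℂ) :
    th4 (z + π * τ / 2) τ = halfPeriodMultiplier z τ * th1 z τ := by
  have hπ : (π : ℂ) ≠ 0 := mod_cast Real.pi_ne_zero
  have harg : (z + π * τ / 2) / π + 1 / 2 = z / π + 1 / 2 + τ / 2 := by field
  have hexp : cexp (-(π * I * τ / 4) - I * z) * cexp (π * I * τ / 4 + I * z) = 1 := by
    rw [← Complex.exp_add, ← Complex.exp_zero]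
    ring_nf
  rw [th1_eq_jacobiTheta₂, th4_eq_jacobiTheta₂, harg, halfPeriodMultiplier]
  linear_combination (-jacobiTheta₂ (z / π + 1 / 2 + τ / 2) τ) * hexp
    + (cexp (-(π * I * τ / 4) - I * z) * cexp (π * I * τ / 4 + I * z)
      * jacobiTheta₂ (z / π + 1 / 2 + τ / 2) τ) * I_sq

lemma th4_neg (z τ : ℂ) : th4 (-z) τ = th4 z τ := by
  rw [th4_eq_jacobiTheta₂, th4_eq_jacobiTheta₂, ← jacobiTheta₂_neg_left, ← jacobiTheta₂_add_left]
  ring_nf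

lemma th1_neg (z τ : ℂ) : th1 (-z) τ = -th1 z τ := by
  have hth4 := th4_add_half_period (-z) τ
  have hth1 := th1_add_half_period (z - π * τ / 2) τ
  rw [neg_add_eq_sub] at hth4
  rw [sub_add_cancel, ← th4_neg, neg_sub, hth4] at hth1
  have hmul : halfPeriodMultiplier (z - π * τ / 2) τ * halfPeriodMultiplier (-z) τ = -1 := by
    simp only [halfPeriodMultiplier, mul_mul_mul_comm, ← Complex.exp_add, I_mul_I]
    ring_nf
    rw [Complex.exp_zero]
  linear_combination hth1 + th1 (-z) τ * hmul

/-- The even-index half of the series of `ϑ₂(z | τ / 2)`, a theta function with characteristic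
`1 / 4`: every product `ϑ₄(α + β) ϑ₁(α - β)` is a `2 × 2` minor in its values. -/
def thetaQuarter (z τ : ℂ) : ℂ :=
  cexp (π * I * τ / 8 + I * z) * jacobiTheta₂ (2 * z / π + τ / 2) (2 * τ)

lemma thetaQuarter_add_pi_div_two (z τ : ℂ) :
    thetaQuarter (z + π / 2) τ = I * thetaQuarter z τ := by
  have hπ : (π : ℂ) ≠ 0 := mod_cast Real.pi_ne_zero
  have harg : 2 * (z + π / 2) / π + τ / 2 = 2 * z / π + τ / 2 + 1 := by field
  have hexp : π * I * τ / 8 + I * (z + π / 2) = π / 2 * I + (π * I * τ / 8 + I * z) := by ring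
  rw [thetaQuarter, thetaQuarter, harg, jacobiTheta₂_add_left, hexp, Complex.exp_add,
    Complex.exp_pi_div_two_mul_I, mul_assoc]

lemma thetaQuarter_add_pi (z τ : ℂ) : thetaQuarter (z + π) τ = -thetaQuarter z τ := by
  rw [show z + π = z + π / 2 + π / 2 by ring, thetaQuarter_add_pi_div_two,
    thetaQuarter_add_pi_div_two, ← mul_assoc, I_mul_I, neg_one_mul]

lemma differentiable_thetaQuarter {τ : ℂ} (hτ : 0 < τ.im) :
    Differentiable ℂ (thetaQuarter · τ) := by
  have h := (differentiable_jacobiTheta₂_fst (τ := 2 * τ) (by simpa using hτ)).comp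
    (by fun_prop : Differentiable ℂ fun z : ℂ => 2 * z / π + τ / 2)
  exact (by fun_prop : Differentiable ℂ fun z : ℂ => cexp (π * I * τ / 8 + I * z)).mul h

lemma exists_thetaQuarter_ne_zero {τ : ℂ} (hτ : 0 < τ.im) : ∃ z, thetaQuarter z τ ≠ 0 := by
  obtain ⟨w, hw⟩ := exists_jacobiTheta₂_ne_zero (τ := 2 * τ) (by simpa using hτ)
  refine ⟨π * (w - τ / 2) / 2, mul_ne_zero (Complex.exp_ne_zero _) ?_⟩
  have hπ : (π : ℂ) ≠ 0 := mod_cast Real.pi_ne_zero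
  rwa [mul_div_cancel₀ _ two_ne_zero, mul_div_cancel_left₀ _ hπ, sub_add_cancel]

lemma th4_add_mul_th1_sub {τ : ℂ} (hτ : 0 < τ.im) (α β : ℂ) :
    th4 (α + β) τ * th1 (α - β) τ
      = -I * (thetaQuarter α τ * thetaQuarter (-β) τ - thetaQuarter (-α) τ * thetaQuarter β τ) := by
  have hπ : (π : ℂ) ≠ 0 := mod_cast Real.pi_ne_zero
  set a := (α + β) / π + 1 / 2
  set b := (α - β) / π + 1 / 2 + τ / 2 with hb
  have hadd : jacobiTheta₂ (a + b) (2 * τ) = jacobiTheta₂ (2 * α / π + τ / 2) (2 * τ) := by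
    rw [← jacobiTheta₂_add_left (2 * α / π + τ / 2)]
    congr 1
    field
  have hsub : jacobiTheta₂ (a - b) (2 * τ) = jacobiTheta₂ (2 * -β / π + τ / 2) (2 * τ) := by
    rw [← jacobiTheta₂_neg_left]
    congr 1
    field
  have hadd_sub : jacobiTheta₂ (a + b - τ) (2 * τ)
      = jacobiTheta₂ (2 * -α / π + τ / 2) (2 * τ) := by
    rw [← jacobiTheta₂_neg_left, ← jacobiTheta₂_add_left]
    congr 1
    field
  have hsub_add : a - b + τ = 2 * β / π + τ / 2 := by field
  have hexp : cexp (π * I * τ / 8 + I * α) * cexp (π * I * τ / 8 + I * -β)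
      = cexp (π * I * τ / 4 + I * (α - β)) := by
    rw [← Complex.exp_add]
    ring_nf
  have hexp_neg : cexp (π * I * τ / 8 + I * -α) * cexp (π * I * τ / 8 + I * β)
      = -(cexp (π * I * τ / 4 + I * (α - β)) * cexp (π * I * τ - 2 * π * I * b)) := by
    rw [← Complex.exp_add, ← Complex.exp_add, ← neg_one_mul (cexp _), ← Complex.exp_pi_mul_I,
      ← Complex.exp_add, hb]
    congr 1
    field
  rw [th4_eq_jacobiTheta₂, th1_eq_jacobiTheta₂, mul_left_comm, jacobiTheta₂_mul_jacobiTheta₂ hτ,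
    hadd, hsub, hadd_sub, hsub_add]
  simp only [thetaQuarter]
  linear_combination I * jacobiTheta₂ (2 * α / π + τ / 2) (2 * τ)
      * jacobiTheta₂ (2 * -β / π + τ / 2) (2 * τ) * hexp
    - I * jacobiTheta₂ (2 * -α / π + τ / 2) (2 * τ)
      * jacobiTheta₂ (2 * β / π + τ / 2) (2 * τ) * hexp_neg

theorem th4_mul_th1_plucker {τ : ℂ} (hτ : 0 < τ.im) (α β γ δ : ℂ) :
    th4 (α + β) τ * th1 (α - β) τ * (th4 (γ + δ) τ * th1 (γ - δ) τ)
      - th4 (α + γ) τ * th1 (α - γ) τ * (th4 (β + δ) τ * th1 (β - δ) τ)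
      + th4 (α + δ) τ * th1 (α - δ) τ * (th4 (β + γ) τ * th1 (β - γ) τ) = 0 := by
  simp only [th4_add_mul_th1_sub hτ]
  ring

theorem th4_zero_mul_th1_mul_th4_mul_th1 {τ : ℂ} (hτ : 0 < τ.im) (x y w : ℂ) :
    th4 0 τ * th1 (x + y) τ * th4 (x + w) τ * th1 (y + w) τ
      = th1 w τ * th4 (x + y + w) τ * th1 x τ * th4 y τ
        + th4 w τ * th1 (x + y + w) τ * th4 x τ * th1 y τ := by
  have h := th4_mul_th1_plucker hτ ((x + y) / 2) (-((x + y) / 2)) ((x + y) / 2 + w) ((x - y) / 2)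
  rw [add_neg_cancel, sub_neg_eq_add, add_halves,
    show (x + y) / 2 + w + (x - y) / 2 = x + w by ring,
    show (x + y) / 2 + w - (x - y) / 2 = y + w by ring,
    show (x + y) / 2 + ((x + y) / 2 + w) = x + y + w by ring,
    show (x + y) / 2 - ((x + y) / 2 + w) = -w by ring,
    show -((x + y) / 2) + (x - y) / 2 = -y by ring,
    show -((x + y) / 2) - (x - y) / 2 = -x by ring,
    show (x + y) / 2 + (x - y) / 2 = x by ring,
    show (x + y) / 2 - (x - y) / 2 = y by ring,
    show -((x + y) / 2) + ((x + y) / 2 + w) = w by ring,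
    show -((x + y) / 2) - ((x + y) / 2 + w) = -(x + y + w) by ring] at h
  simp only [th1_neg, th4_neg] at h
  linear_combination h

theorem th4_zero_mul_th4_mul_th1_mul_th1 {τ : ℂ} (hτ : 0 < τ.im) (x y w : ℂ) :
    th4 0 τ * th4 (x + y) τ * th1 (x + w) τ * th1 (y + w) τ
      = th4 w τ * th4 (x + y + w) τ * th1 x τ * th1 y τ
        + th1 w τ * th1 (x + y + w) τ * th4 x τ * th4 y τ := by
  have h := th4_zero_mul_th1_mul_th4_mul_th1 hτ (x + π * τ / 2) y w
  have hmul := halfPeriodMultiplier_mul_eq (z := x + y + w) (z' := x) (w := x + y)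
    (w' := x + w) τ (by ring)
  rw [add_right_comm x _ y, add_right_comm x _ w, add_right_comm (x + y) _ w] at h
  simp only [th1_add_half_period, th4_add_half_period] at h
  refine mul_left_cancel₀ (mul_ne_zero (halfPeriodMultiplier_ne_zero (x + y + w) τ)
    (halfPeriodMultiplier_ne_zero x τ)) ?_
  linear_combination h + th4 0 τ * th4 (x + y) τ * th1 (x + w) τ * th1 (y + w) τ * hmul

theorem th4_zero_mul_th4_mul_th4_mul_th4 {τ : ℂ} (hτ : 0 < τ.im) (x y w : ℂ) :
    th4 0 τ * th4 (x + y) τ * th4 (x + w) τ * th4 (y + w) τ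
      = th4 w τ * th4 (x + y + w) τ * th4 x τ * th4 y τ
        + th1 w τ * th1 (x + y + w) τ * th1 x τ * th1 y τ := by
  have h := th4_zero_mul_th1_mul_th4_mul_th1 hτ x (y + π * τ / 2) w
  have hmul := halfPeriodMultiplier_mul_eq (z := x + y + w) (z' := y) (w := x + y)
    (w' := y + w) τ (by ring)
  rw [← add_assoc, add_right_comm (x + y), add_right_comm y] at h
  simp only [th1_add_half_period, th4_add_half_period] at h
  refine mul_left_cancel₀ (mul_ne_zero (halfPeriodMultiplier_ne_zero (x + y + w) τ)
    (halfPeriodMultiplier_ne_zero y τ)) ?_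
  linear_combination h + th4 0 τ * th4 (x + y) τ * th4 (x + w) τ * th4 (y + w) τ * hmul

lemma th4_zero_ne_zero {τ : ℂ} (hτ : 0 < τ.im) : th4 0 τ ≠ 0 := by
  intro h0
  have hd := differentiable_thetaQuarter hτ
  have hd_neg : Differentiable ℂ fun z => thetaQuarter (-z) τ := hd.comp differentiable_neg
  have hsq (z : ℂ) : (thetaQuarter z τ - thetaQuarter (-z) τ)
      * (thetaQuarter z τ + thetaQuarter (-z) τ) = 0 := by
    have h := th4_add_mul_th1_sub hτ z (-z)
    rw [add_neg_cancel, h0, zero_mul, neg_neg] at h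
    have h' := (mul_eq_zero.1 h.symm).resolve_left (neg_ne_zero.2 I_ne_zero)
    linear_combination h'
  obtain ⟨z, hz⟩ := exists_thetaQuarter_ne_zero hτ
  have hadd := thetaQuarter_add_pi_div_two z τ
  have hneg := thetaQuarter_add_pi_div_two (-(z + π / 2)) τ
  rw [show -(z + π / 2) + π / 2 = -z by ring] at hneg
  refine hz ?_
  obtain heven | hodd : (∀ z, thetaQuarter z τ - thetaQuarter (-z) τ = 0)
      ∨ ∀ z, thetaQuarter z τ + thetaQuarter (-z) τ = 0 :=
    eq_zero_or_eq_zero_of_differentiable_mul_eq_zero (hd.sub hd_neg) (hd.add hd_neg) hsq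
  · linear_combination (heven z + hneg - I * heven (z + π / 2) + I * hadd
      + thetaQuarter z τ * I_sq) / 2
  · linear_combination (hodd z - hneg - I * hodd (z + π / 2) + I * hadd
      + thetaQuarter z τ * I_sq) / 2

lemma th4_zero_mul_thetaQuarter_zero {τ : ℂ} (hτ : 0 < τ.im) :
    th4 0 τ * thetaQuarter 0 τ
      = th4 (2 * ηc) τ * (thetaQuarter ηc τ + thetaQuarter (-ηc) τ) := by
  have hπ : (π : ℂ) ≠ 0 := mod_cast Real.pi_ne_zero
  have hcubic := jacobiTheta₂_cubic hτ
  have hω : cexp (I * -ηc) = -cexp (2 * π * I / 3) := by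
    rw [← neg_one_mul (cexp _), ← Complex.exp_pi_mul_I, ← Complex.exp_add,
      ← Complex.exp_periodic, ηc]
    ring_nf
  have hω_sq : cexp (I * ηc) = -cexp (2 * π * I / 3) ^ 2 := by
    rw [← Complex.exp_nat_mul, ← neg_one_mul (cexp _), ← Complex.exp_pi_mul_I,
      ← Complex.exp_add, ← Complex.exp_periodic, ηc]
    push_cast
    ring_nf
  have hth4_two : th4 (2 * ηc) τ = jacobiTheta₂ (1 / 2 + 2 / 3) τ := by
    rw [th4_eq_jacobiTheta₂, ηc]
    congr 1
    field
  have hth4_one : th4 (2 * ηc) τ = jacobiTheta₂ (1 / 2 + 1 / 3) τ := by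
    rw [← th4_neg, th4_eq_jacobiTheta₂, ← jacobiTheta₂_add_left, ηc]
    congr 1
    field
  have hquarter_zero : thetaQuarter 0 τ = cexp (π * I * τ / 8) * jacobiTheta₂ (τ / 2) (2 * τ) := by
    simp only [thetaQuarter, mul_zero, zero_div, add_zero, zero_add]
  have hquarter : thetaQuarter ηc τ
      = cexp (π * I * τ / 8) * cexp (I * ηc) * jacobiTheta₂ (τ / 2 + 2 / 3) (2 * τ) := by
    rw [thetaQuarter, ← Complex.exp_add, ηc]
    congr 2
    field
  have hquarter_neg : thetaQuarter (-ηc) τ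
      = cexp (π * I * τ / 8) * cexp (I * -ηc) * jacobiTheta₂ (τ / 2 + 1 / 3) (2 * τ) := by
    rw [thetaQuarter, ← Complex.exp_add, ← jacobiTheta₂_add_left, ηc]
    congr 2
    field
  rw [mul_add, hquarter, hquarter_neg, hω, hω_sq, hquarter_zero, th4_eq_jacobiTheta₂ 0, zero_div,
    zero_add]
  nth_rw 1 [hth4_two]
  rw [hth4_one]
  linear_combination cexp (π * I * τ / 8) * hcubic

end Theta

section VertexWeights

variable {τ : ℂ}

lemma rv_eq_mul (hτ : 0 < τ.im) (u : ℂ) :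
    rv τ u = th4 0 (2 * τ) * th1 (2 * ηc - u) (2 * τ) * th4 (2 * ηc - u) (2 * τ) := by
  have h2τ : 0 < (2 * τ).im := by simpa using hτ
  have ha := th4_add_mul_th1_sub h2τ (u + ηc) (-ηc)
  have hb := th4_add_mul_th1_sub h2τ (u + ηc) ηc
  have hr := th4_add_mul_th1_sub h2τ (2 * ηc - u) 0
  have hpi : 2 * ηc - u = -(u + ηc) + Real.pi := by
    rw [ηc]
    ring
  have hpi' : -(2 * ηc - u) + Real.pi = u + ηc := by
    rw [ηc]
    ring
  have hquarter : thetaQuarter (2 * ηc - u) (2 * τ) = -thetaQuarter (-(u + ηc)) (2 * τ) := by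
    rw [hpi, thetaQuarter_add_pi]
  have hquarter' : thetaQuarter (-(2 * ηc - u)) (2 * τ) = -thetaQuarter (u + ηc) (2 * τ) := by
    rw [← hpi', thetaQuarter_add_pi, neg_neg]
  rw [add_neg_cancel_right, sub_neg_eq_add, neg_neg, add_assoc, ← two_mul] at ha
  rw [add_sub_cancel_right, add_assoc, ← two_mul] at hb
  rw [add_zero, sub_zero, neg_zero, hquarter, hquarter'] at hr
  rw [rv, av, bv]
  linear_combination th4 (2 * ηc) (2 * τ) * (ha + hb) - th4 0 (2 * τ) * hr
    + I * (thetaQuarter (u + ηc) (2 * τ) - thetaQuarter (-(u + ηc)) (2 * τ))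
      * th4_zero_mul_thetaQuarter_zero h2τ

lemma differentiable_rv (hτ : 0 < τ.im) : Differentiable ℂ (rv τ) := by
  have h2τ : 0 < (2 * τ).im := by simpa using hτ
  have hshift : Differentiable ℂ fun u : ℂ => 2 * ηc - u := by fun_prop
  rw [funext (rv_eq_mul hτ)]
  exact (((differentiable_th1 h2τ).comp hshift).const_mul _).mul
    ((differentiable_th4 h2τ).comp hshift)

lemma exists_rv_ne_zero (hτ : 0 < τ.im) : ∃ u, rv τ u ≠ 0 := by
  have h2τ : 0 < (2 * τ).im := by simpa using hτ
  by_contra! hzero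
  have hmul (z : ℂ) : th1 z (2 * τ) * th4 z (2 * τ) = 0 := by
    have h := hzero (2 * ηc - z)
    rw [rv_eq_mul hτ, sub_sub_cancel, mul_assoc] at h
    exact (mul_eq_zero.1 h).resolve_left (th4_zero_ne_zero h2τ)
  rcases eq_zero_or_eq_zero_of_differentiable_mul_eq_zero (differentiable_th1 h2τ)
    (differentiable_th4 h2τ) hmul with h | h
  · exact (exists_th1_ne_zero h2τ).elim fun z hz => hz (h z)
  · exact (exists_th4_ne_zero h2τ).elim fun z hz => hz (h z)

lemma Rcheckent_comm (τ u : ℂ) (p q : Fin 2 × Fin 2) : Rcheckent τ u p q = Rcheckent τ u q p := by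
  obtain ⟨s, t⟩ := p
  obtain ⟨s', t'⟩ := q
  fin_cases s <;> fin_cases t <;> fin_cases s' <;> fin_cases t' <;> rfl

lemma sum_Rcheckent_mul (τ u : ℂ) (f : Fin 2 → Fin 2 → ℂ) (s t : Fin 2) :
    ∑ s', ∑ t', Rcheckent τ u (s, t) (s', t') * f s' t'
      = if s = t then av τ u * f s t + dv τ u * f (flipS s) (flipS t)
        else cv τ u * f s t + bv τ u * f t s := by
  fin_cases s <;> fin_cases t <;>
    simp [Rcheckent, Rent, flipS, Fin.sum_univ_two, add_comm]

/-- An entire family `K y` of two-site boundary vectors that `Ř(2y)` maps to a multiple of `K (-y)`,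
as in a reflection equation; `E` is the entire function that determines the multiple. -/
structure IsReflecting (τ : ℂ) (E : ℂ → ℂ) (K : ℂ → Fin 2 → Fin 2 → ℂ) : Prop where
  differentiable_factor : Differentiable ℂ E
  differentiable_vector : ∀ s t, Differentiable ℂ (K · s t)
  reflect : ∀ y s t,
    E (2 * ηc - 2 * y) * ∑ s', ∑ t', Rcheckent τ (2 * y) (s, t) (s', t') * K y s' t'
      = rv τ (2 * y) * (E (2 * ηc + 2 * y) * K (-y) s t)

lemma differentiable_chiC (hτ : 0 < τ.im) (lam : ℂ) (s t : Fin 2) :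
    Differentiable ℂ (chiC τ lam · s t) := by
  have h2τ : 0 < (2 * τ).im := by simpa using hτ
  have hadd : Differentiable ℂ fun y : ℂ => y + lam := by fun_prop
  have hsub : Differentiable ℂ fun y : ℂ => y - lam - 2 * ηc := by fun_prop
  unfold chiC
  split_ifs
  · exact ((differentiable_th1 h2τ).comp hadd).mul ((differentiable_th4 h2τ).comp hsub)
  · exact ((differentiable_th1 h2τ).comp hsub).mul ((differentiable_th4 h2τ).comp hadd)
  · exact differentiable_const 0

theorem isReflecting_chiC (hτ : 0 < τ.im) (lam : ℂ) :
    IsReflecting τ (th4 · (2 * τ)) (chiC τ lam) := by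
  have h2τ : 0 < (2 * τ).im := by simpa using hτ
  refine ⟨differentiable_th4 h2τ, differentiable_chiC hτ lam, fun y s t => ?_⟩
  have hud := th4_zero_mul_th1_mul_th4_mul_th1 h2τ (y + lam) (y - lam - 2 * ηc) (2 * ηc)
  have hdu := th4_zero_mul_th1_mul_th4_mul_th1 h2τ (y - lam - 2 * ηc) (y + lam) (2 * ηc)
  have hneg_sub : -y - lam - 2 * ηc = -(y + lam + 2 * ηc) := by ring
  have hneg_add : -y + lam = -(y - lam - 2 * ηc + 2 * ηc) := by ring
  have hsum : y + lam + (y - lam - 2 * ηc) = -(2 * ηc - 2 * y) := by ring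
  have hsum_add : -(2 * ηc - 2 * y) + 2 * ηc = 2 * y := by ring
  rw [hsum, hsum_add] at hud
  rw [add_comm (y - lam - 2 * ηc), hsum, hsum_add] at hdu
  simp only [th1_neg] at hud hdu
  rw [sum_Rcheckent_mul, rv_eq_mul hτ, cv, bv, add_comm (2 * y)]
  fin_cases s <;> fin_cases t
  · simp [chiC, flipS]
  · simp only [chiC, hneg_sub, hneg_add, Fin.zero_eta, Fin.isValue, Fin.mk_one, zero_ne_one,
      one_ne_zero, and_self, ↓reduceIte, th1_neg, th4_neg]
    linear_combination
      -th4 (2 * ηc - 2 * y) (2 * τ) * th4 (2 * ηc + 2 * y) (2 * τ) * hud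
  · simp only [chiC, hneg_sub, hneg_add, Fin.zero_eta, Fin.isValue, Fin.mk_one, zero_ne_one,
      one_ne_zero, and_self, ↓reduceIte, th1_neg, th4_neg]
    linear_combination
      -th4 (2 * ηc - 2 * y) (2 * τ) * th4 (2 * ηc + 2 * y) (2 * τ) * hdu
  · simp [chiC, flipS]

lemma differentiable_chibarC (hτ : 0 < τ.im) (lam : ℂ) (s t : Fin 2) :
    Differentiable ℂ (chibarC τ lam · s t) := by
  have h2τ : 0 < (2 * τ).im := by simpa using hτ
  have hadd : Differentiable ℂ fun y : ℂ => y + lam := by fun_prop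
  have hsub : Differentiable ℂ fun y : ℂ => y - lam - 2 * ηc := by fun_prop
  unfold chibarC
  split_ifs
  · exact ((differentiable_th1 h2τ).comp hadd).mul ((differentiable_th1 h2τ).comp hsub)
  · exact ((differentiable_th4 h2τ).comp hsub).mul ((differentiable_th4 h2τ).comp hadd)
  · exact differentiable_const 0

theorem isReflecting_chibarC (hτ : 0 < τ.im) (lam : ℂ) :
    IsReflecting τ (th1 · (2 * τ)) (chibarC τ lam) := by
  have h2τ : 0 < (2 * τ).im := by simpa using hτ
  refine ⟨differentiable_th1 h2τ, differentiable_chibarC hτ lam, fun y s t => ?_⟩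
  have huu := th4_zero_mul_th4_mul_th1_mul_th1 h2τ (y + lam) (y - lam - 2 * ηc) (2 * ηc)
  have hdd := th4_zero_mul_th4_mul_th4_mul_th4 h2τ (y + lam) (y - lam - 2 * ηc) (2 * ηc)
  have hneg_sub : -y - lam - 2 * ηc = -(y + lam + 2 * ηc) := by ring
  have hneg_add : -y + lam = -(y - lam - 2 * ηc + 2 * ηc) := by ring
  have hsum : y + lam + (y - lam - 2 * ηc) = -(2 * ηc - 2 * y) := by ring
  have hsum_add : -(2 * ηc - 2 * y) + 2 * ηc = 2 * y := by ring
  rw [hsum, hsum_add] at huu hdd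
  simp only [th4_neg] at huu hdd
  rw [sum_Rcheckent_mul, rv_eq_mul hτ, av, dv, add_comm (2 * y)]
  fin_cases s <;> fin_cases t
  · simp only [chibarC, flipS, hneg_sub, hneg_add, Fin.zero_eta, Fin.isValue, one_ne_zero, and_self,
      ↓reduceIte, th1_neg]
    linear_combination
      -th1 (2 * ηc - 2 * y) (2 * τ) * th1 (2 * ηc + 2 * y) (2 * τ) * huu
  · simp [chibarC]
  · simp [chibarC]
  · simp only [chibarC, flipS, hneg_sub, hneg_add, Fin.mk_one, Fin.isValue, one_ne_zero, and_self,
      ↓reduceIte, th4_neg]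
    linear_combination
      -th1 (2 * ηc - 2 * y) (2 * τ) * th1 (2 * ηc + 2 * y) (2 * τ) * hdd

end VertexWeights

section Pairing

open scoped Matrix

open Function (update)

variable {L : ℕ}

/-- The exchange of the spins at sites `i`, `j` of a configuration with a given pair of spins; it
reindexes the double sum over configurations and pairs in a pairing with `applyRc`. -/
def exchangeSpins (i j : Fin L) (q : (Fin L → Fin 2) × Fin 2 × Fin 2) :
    (Fin L → Fin 2) × Fin 2 × Fin 2 :=
  (update (update q.1 i q.2.1) j q.2.2, q.1 i, q.1 j)

lemma exchangeSpins_involutive {i j : Fin L} (hij : i ≠ j) :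
    Function.Involutive (exchangeSpins i j) := by
  rintro ⟨α, s, t⟩
  simp only [exchangeSpins, Function.update_self, Function.update_of_ne hij]
  refine Prod.ext ?_ rfl
  rw [Function.update_comm hij, Function.update_idem, Function.update_comm hij.symm,
    Function.update_idem, Function.update_eq_self, Function.update_eq_self]

lemma dotProduct_applyRc (τ u : ℂ) {i j : Fin L} (hij : i ≠ j) (φ ψ : (Fin L → Fin 2) → ℂ) :
    φ ⬝ᵥ applyRc τ u i j ψ = applyRc τ u i j φ ⬝ᵥ ψ := by
  simp only [dotProduct, applyRc, Finset.mul_sum, Finset.sum_mul, ← Fintype.sum_prod_type']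
  rw [← Equiv.sum_comp (exchangeSpins_involutive hij).toPerm]
  refine Finset.sum_congr rfl fun q _ => ?_
  have hself := congrArg Prod.fst (exchangeSpins_involutive hij q)
  simp only [exchangeSpins] at hself
  simp only [Function.Involutive.coe_toPerm, exchangeSpins, Function.update_self,
    Function.update_of_ne hij] at hself ⊢
  rw [hself, Rcheckent_comm]
  ring

variable {n : ℕ}

/-- The site carrying the inhomogeneity `x_i` in `(x₁, -x₁, …, x_n, -x_n, 0)`. -/
def leftSite (i : Fin n) : Fin (2 * n + 1) := ⟨2 * i, by lia⟩

/-- The site carrying the inhomogeneity `-x_i` in `(x₁, -x₁, …, x_n, -x_n, 0)`. -/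
def rightSite (i : Fin n) : Fin (2 * n + 1) := ⟨2 * i + 1, by lia⟩

lemma leftSite_ne_rightSite (i : Fin n) : leftSite i ≠ rightSite i := by
  simp [leftSite, rightSite]

lemma interleave_leftSite (x : Fin n → ℂ) (i : Fin n) : interleave x (leftSite i) = x i := by
  simp [interleave, leftSite]

lemma interleave_rightSite (x : Fin n → ℂ) (i : Fin n) : interleave x (rightSite i) = -x i := by
  have hlt : 2 * (i : ℕ) + 1 < 2 * n := by lia
  have hdiv : (2 * (i : ℕ) + 1) / 2 = i := by lia
  simp [interleave, rightSite, hlt, hdiv]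

lemma interleave_update_neg (x : Fin n → ℂ) (i : Fin n) :
    interleave (update x i (-x i))
      = fun l => interleave x (Equiv.swap (leftSite i) (rightSite i) l) := by
  funext l
  rcases eq_or_ne l (leftSite i) with rfl | hl
  · rw [Equiv.swap_apply_left, interleave_leftSite, interleave_rightSite, Function.update_self]
  rcases eq_or_ne l (rightSite i) with rfl | hr
  · rw [Equiv.swap_apply_right, interleave_leftSite, interleave_rightSite, Function.update_self,
      neg_neg]
  have hli : (l : ℕ) / 2 ≠ i := by
    rw [leftSite, Ne, Fin.ext_iff] at hl
    rw [rightSite, Ne, Fin.ext_iff] at hr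
    lia
  have hne (h : (l : ℕ) / 2 < n) : (⟨(l : ℕ) / 2, h⟩ : Fin n) ≠ i :=
    fun he => hli (congrArg Fin.val he)
  simp only [interleave, Equiv.swap_apply_of_ne_of_ne hl hr, Function.update_of_ne (hne _)]

/-- The components of the vector `K(x₁) ⊗ ⋯ ⊗ K(x_n) ⊗ g` on `2n + 1` sites. -/
def boundaryVector (K : ℂ → Fin 2 → Fin 2 → ℂ) (g : Fin 2 → ℂ) (x : Fin n → ℂ)
    (α : Fin (2 * n + 1) → Fin 2) : ℂ :=
  (∏ m, K (x m) (α (leftSite m)) (α (rightSite m))) * g (α (Fin.last (2 * n)))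

lemma boundaryVector_update_update (K : ℂ → Fin 2 → Fin 2 → ℂ) (g : Fin 2 → ℂ) (x : Fin n → ℂ)
    (i : Fin n) (y : ℂ) (α : Fin (2 * n + 1) → Fin 2) (s t : Fin 2) :
    boundaryVector K g (update x i y) (update (update α (leftSite i) s) (rightSite i) t)
      = K y s t * ((∏ m ∈ Finset.univ.erase i, K (x m) (α (leftSite m)) (α (rightSite m)))
        * g (α (Fin.last (2 * n)))) := by
  have hoff (l : Fin (2 * n + 1)) (hl : (l : ℕ) / 2 ≠ i) :
      update (update α (leftSite i) s) (rightSite i) t l = α l := by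
    rw [Function.update_of_ne, Function.update_of_ne] <;>
    · rintro rfl
      simp only [leftSite, rightSite] at hl
      lia
  rw [boundaryVector, ← Finset.mul_prod_erase _ _ (Finset.mem_univ i), Function.update_self,
    Function.update_self, Function.update_of_ne (leftSite_ne_rightSite i), Function.update_self,
    mul_assoc, hoff (Fin.last _) (by simp only [Fin.val_last]; lia)]
  congr 2
  refine Finset.prod_congr rfl fun m hm => ?_
  have hmi : m ≠ i := Finset.ne_of_mem_erase hm
  have : (m : ℕ) ≠ i := Fin.val_ne_of_ne hmi
  rw [Function.update_of_ne hmi, hoff (leftSite m) (by simp only [leftSite]; lia),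
    hoff (rightSite m) (by simp only [rightSite]; lia)]

lemma boundaryVector_update (K : ℂ → Fin 2 → Fin 2 → ℂ) (g : Fin 2 → ℂ) (x : Fin n → ℂ)
    (i : Fin n) (y : ℂ) (α : Fin (2 * n + 1) → Fin 2) :
    boundaryVector K g (update x i y) α = K y (α (leftSite i)) (α (rightSite i))
      * ((∏ m ∈ Finset.univ.erase i, K (x m) (α (leftSite m)) (α (rightSite m)))
        * g (α (Fin.last (2 * n)))) := by
  simpa only [Function.update_eq_self] using
    boundaryVector_update_update K g x i y α (α (leftSite i)) (α (rightSite i))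

namespace IsReflecting

variable {τ : ℂ} {E : ℂ → ℂ} {K : ℂ → Fin 2 → Fin 2 → ℂ} {Ψ : PsiFam}

lemma applyRc_boundaryVector (hK : IsReflecting τ E K) (g : Fin 2 → ℂ) (x : Fin n → ℂ)
    (i : Fin n) :
    E (2 * ηc - 2 * x i) • applyRc τ (2 * x i) (leftSite i) (rightSite i) (boundaryVector K g x)
      = (rv τ (2 * x i) * E (2 * ηc + 2 * x i)) • boundaryVector K g (update x i (-x i)) := by
  funext α
  have hsplit := boundaryVector_update_update K g x i (x i) α
  rw [Function.update_eq_self] at hsplit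
  simp only [Pi.smul_apply, smul_eq_mul, applyRc, hsplit, boundaryVector_update, ← mul_assoc,
    ← Finset.sum_mul]
  simp only [mul_assoc, hK.reflect (x i) (α (leftSite i)) (α (rightSite i))]

lemma rv_mul_dotProduct_sub (hK : IsReflecting τ E K) (h1 : PsiP1 τ Ψ) (g : Fin 2 → ℂ)
    (x : Fin n → ℂ) (i : Fin n) {U : Fin (2 * n + 1) → ℂ}
    (hU : U (rightSite i) - U (leftSite i) = 2 * x i) :
    rv τ (2 * x i) * (E (2 * ηc - 2 * x i)
        * (boundaryVector K g x ⬝ᵥ Ψ n fun l => U (Equiv.swap (leftSite i) (rightSite i) l))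
      - E (2 * ηc + 2 * x i) * (boundaryVector K g (update x i (-x i)) ⬝ᵥ Ψ n U)) = 0 := by
  have hexch := h1 n U (leftSite i) (rightSite i) rfl
  rw [hU] at hexch
  have hexch_pair : applyRc τ (2 * x i) (leftSite i) (rightSite i) (boundaryVector K g x) ⬝ᵥ Ψ n U
      = rv τ (2 * x i) * (boundaryVector K g x ⬝ᵥ
        Ψ n fun l => U (Equiv.swap (leftSite i) (rightSite i) l)) := by
    rw [← dotProduct_applyRc _ _ (leftSite_ne_rightSite i), hexch]
    exact dotProduct_smul (rv τ (2 * x i)) _ _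
  have hreflect := congrArg (· ⬝ᵥ Ψ n U) (hK.applyRc_boundaryVector g x i)
  simp only [smul_dotProduct, smul_eq_mul] at hreflect
  linear_combination hreflect - E (2 * ηc - 2 * x i) * hexch_pair

lemma differentiable_dotProduct (hK : IsReflecting τ E K) (hent : PsiEntire Ψ) (g : Fin 2 → ℂ)
    (x : Fin n → ℂ) (i : Fin n) (U : Fin (2 * n + 1) → ℂ) (j : Fin (2 * n + 1)) {f h : ℂ → ℂ}
    (hf : Differentiable ℂ f) (hh : Differentiable ℂ h) :
    Differentiable ℂ fun y =>
      boundaryVector K g (update x i (f y)) ⬝ᵥ Ψ n (update U j (h y)) := by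
  simp only [dotProduct, boundaryVector_update]
  exact Differentiable.fun_sum fun α _ =>
    (((hK.differentiable_vector _ _).comp hf).mul_const _).mul ((hent n U j α).comp hh)

theorem mul_dotProduct_swap (hτ : 0 < τ.im) (hK : IsReflecting τ E K) (hent : PsiEntire Ψ)
    (h1 : PsiP1 τ Ψ) (g : Fin 2 → ℂ) (x : Fin n → ℂ) (i : Fin n) {U : Fin (2 * n + 1) → ℂ}
    (hU : U (rightSite i) - U (leftSite i) = 2 * x i) :
    E (2 * ηc - 2 * x i)
        * (boundaryVector K g x ⬝ᵥ Ψ n fun l => U (Equiv.swap (leftSite i) (rightSite i) l))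
      = E (2 * ηc + 2 * x i) * (boundaryVector K g (update x i (-x i)) ⬝ᵥ Ψ n U) := by
  set a := leftSite i
  set b := rightSite i
  have hswap (z : ℂ) : (fun l => update U b z (Equiv.swap a b l))
      = update (fun l => U (Equiv.swap a b l)) a z := by
    refine (Function.update_comp_equiv U (Equiv.swap a b) b z).trans ?_
    rw [Equiv.symm_swap, Equiv.swap_apply_right]
    rfl
  have hUb : U a + 2 * x i = U b := by rw [← hU, add_sub_cancel]
  let D : ℂ → ℂ := fun y =>
    E (2 * ηc - 2 * y) * (boundaryVector K g (update x i y) ⬝ᵥ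
        Ψ n (update (fun l => U (Equiv.swap a b l)) a (U a + 2 * y)))
      - E (2 * ηc + 2 * y) * (boundaryVector K g (update x i (-y)) ⬝ᵥ
        Ψ n (update U b (U a + 2 * y)))
  have hD : Differentiable ℂ D :=
    ((hK.differentiable_factor.comp (f := fun y => 2 * ηc - 2 * y) (by fun_prop)).mul
      (hK.differentiable_dotProduct hent g x i _ a (by fun_prop) (by fun_prop))).sub
    ((hK.differentiable_factor.comp (f := fun y => 2 * ηc + 2 * y) (by fun_prop)).mul
      (hK.differentiable_dotProduct hent g x i U b (by fun_prop) (by fun_prop)))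
  have hrv : Differentiable ℂ fun y => rv τ (2 * y) :=
    (differentiable_rv hτ).comp (by fun_prop)
  have hmul (y : ℂ) : rv τ (2 * y) * D y = 0 := by
    have h := hK.rv_mul_dotProduct_sub h1 g (update x i y) i (U := update U b (U a + 2 * y)) (by
      rw [Function.update_self, Function.update_self,
        Function.update_of_ne (leftSite_ne_rightSite i), add_sub_cancel_left])
    rwa [Function.update_self, Function.update_idem, hswap] at h
  rcases eq_zero_or_eq_zero_of_differentiable_mul_eq_zero hrv hD hmul with h | h
  · obtain ⟨u, hu⟩ := exists_rv_ne_zero hτ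
    exact absurd (by simpa [mul_div_cancel₀] using h (u / 2)) hu
  · have hx := sub_eq_zero.1 (h (x i))
    rwa [hUb, ← hswap, Function.update_eq_self, Function.update_eq_self] at hx

theorem mul_dotProduct_interleave_update_neg (hτ : 0 < τ.im) (hK : IsReflecting τ E K)
    (hent : PsiEntire Ψ) (h1 : PsiP1 τ Ψ) (g : Fin 2 → ℂ) (x : Fin n → ℂ) (i : Fin n) :
    E (2 * (ηc + x i)) * (boundaryVector K g (update x i (-x i)) ⬝ᵥ
        Ψ n (interleave (update x i (-x i))))
      = E (2 * (ηc - x i)) * (boundaryVector K g x ⬝ᵥ Ψ n (interleave x)) := by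
  have hU : interleave (update x i (-x i)) (rightSite i)
      - interleave (update x i (-x i)) (leftSite i) = 2 * x i := by
    rw [interleave_leftSite, interleave_rightSite, Function.update_self]
    ring
  have h := hK.mul_dotProduct_swap hτ hent h1 g x i hU
  rw [interleave_update_neg] at h ⊢
  simp only [Equiv.swap_apply_self] at h
  rw [mul_add, mul_sub]
  exact h.symm

end IsReflecting

lemma Zfun_eq_dotProduct (τ lam : ℂ) (Ψ : PsiFam) (x : Fin n → ℂ) :
    Zfun τ lam Ψ n x
      = boundaryVector (chiC τ lam) (fun s => if s = 0 then 1 else 0) x ⬝ᵥ Ψ n (interleave x) :=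
  rfl

lemma Zbarfun_eq_dotProduct (τ lam ε : ℂ) (Ψ : PsiFam) (x : Fin n → ℂ) :
    Zbarfun τ lam ε Ψ n x
      = boundaryVector (chibarC τ lam) (fun s => if s = 0 then 1 else ε) x ⬝ᵥ
        Ψ n (interleave x) :=
  rfl

end Pairing

theorem stmt10 (τ lam : ℂ) (hτ : 0 < τ.im) (Ψ : PsiFam)
    (hent : PsiEntire Ψ) (h1 : PsiP1 τ Ψ)
    (n : ℕ) (hn : 1 ≤ n) (x : Fin n → ℂ) (i : Fin n) :
    th4 (2*(ηc + x i)) (2*τ) * Zfun τ lam Ψ n (Function.update x i (-(x i)))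
      = th4 (2*(ηc - x i)) (2*τ) * Zfun τ lam Ψ n x ∧
    th1 (2*(ηc + x i)) (2*τ) * Zbarfun τ lam 1 Ψ n (Function.update x i (-(x i)))
      = th1 (2*(ηc - x i)) (2*τ) * Zbarfun τ lam 1 Ψ n x ∧
    th1 (2*(ηc + x i)) (2*τ) * Zbarfun τ lam (-1) Ψ n (Function.update x i (-(x i)))
      = th1 (2*(ηc - x i)) (2*τ) * Zbarfun τ lam (-1) Ψ n x := by
  have hbar (ε : ℂ) := (isReflecting_chibarC hτ lam).mul_dotProduct_interleave_update_neg hτ hent h1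
    (fun s => if s = 0 then 1 else ε) x i
  have hchi := (isReflecting_chiC hτ lam).mul_dotProduct_interleave_update_neg hτ hent h1
    (fun s => if s = 0 then 1 else 0) x i
  simp only [Zfun_eq_dotProduct, Zbarfun_eq_dotProduct]
  exact ⟨hchi, hbar 1, hbar (-1)⟩

end
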